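/- Let p be an odd prime and k an algebraically closed field of characteristic p. Let f(x) = Σ_{i=1}^{2p+1} c_i x^i ∈ k[x] with c_{2p+1} = 1 and c_1 ≠ 0, and write f(x) = x·f̃(x). Let A be the p×p matrix with entries a_{ij} = κ_{pi−j}, where f(x)^{(p−1)/2} = Σ_m κ_m x^m. If rank(A) = 1, then there exists a polynomial h̃ ∈ k[x] of degree p−1 such that f̃(x)^{(p−1)/2} = h̃(x)^p; consequently f is not squarefree. -/

import Mathlib

open Polynomial

/-!
Write `f ^ n = X ^ n * G` with `G = f̃ ^ n`, where `n = (p - 1) / 2`. Read from right to left, row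
`i` of the Cartier–Manin matrix lists the coefficients of `X ^ n * G` in degrees `p * i + s`,
`0 ≤ s < p`. The lowest term of `X ^ n * G` has degree `n` since `G(0) ≠ 0`, and the highest has
degree `p * (p - 1) + n`. So the first row vanishes at all `s < n`, the last row at all `s > n`, and
neither vanishes at `s = n`. If the rank is one, the `2 × 2` minors then kill every column `s ≠ n`.
Hence `G` is a polynomial in `X ^ p`, that is, a `p`-th power `h̃ ^ p`. A squarefree `f̃` would have
to divide `h̃`, making `f̃ ^ p` a divisor of `h̃ ^ p = f̃ ^ n` although `n < p`.
-/

section RankOne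

variable {m n K : Type*} [Fintype n] [Field K] {A : Matrix m n K}

theorem mul_apply_eq_mul_apply_of_rank_le_one (hA : A.rank ≤ 1) (i i' : m) (j j' : n) :
    A i j * A i' j' = A i j' * A i' j := by
  by_contra hne
  have hdet : IsUnit (A.submatrix ![i, i'] ![j, j']).det := by
    rwa [isUnit_iff_ne_zero, Matrix.det_fin_two, ne_eq, sub_eq_zero]
  have hrank := A.rank_submatrix_le ![i, i'] ![j, j']
  rw [Matrix.rank_of_isUnit _ ((Matrix.isUnit_iff_isUnit_det _).2 hdet), Fintype.card_fin] at hrank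
  omega

theorem apply_eq_zero_of_rank_le_one (hA : A.rank ≤ 1) {i₀ : m} {j j₀ : n}
    (hj : A i₀ j = 0) (hj₀ : A i₀ j₀ ≠ 0) (i : m) : A i j = 0 := by
  have hminor := mul_apply_eq_mul_apply_of_rank_le_one hA i i₀ j j₀
  rw [hj, mul_zero] at hminor
  exact (mul_eq_zero.1 hminor).resolve_right hj₀

end RankOne

section CartierManin

/-- The `p × p` matrix of coefficients of `F` which, for `F = f ^ ((p - 1) / 2)`, is the
Cartier–Manin matrix of the genus `p` curve `y ^ 2 = f(x)` in characteristic `p`. The classical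
entries `κ_{pi - j}`, `1 ≤ i, j ≤ p`, are reindexed from zero. -/
def cartierManinMatrix {R : Type*} [Semiring R] (p : ℕ) (F : R[X]) : Matrix (Fin p) (Fin p) R :=
  Matrix.of fun i j => F.coeff (p * (i + 1) - (j + 1))

theorem cartierManinMatrix_apply_rev {R : Type*} [Semiring R] {p : ℕ} (F : R[X]) (i s : Fin p) :
    cartierManinMatrix p F i s.rev = F.coeff (p * i + s) := by
  have hdegree : p * (i + 1) - ((s.rev : ℕ) + 1) = p * i + s := by
    rw [Fin.val_rev, mul_add]
    omega
  rw [cartierManinMatrix, Matrix.of_apply, hdegree]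

variable {K : Type*} [Field K] {p n : ℕ} {G : K[X]}

theorem coeff_X_pow_mul_eq_zero_of_rank_le_one (hn : n < p) (hG₀ : G.coeff 0 ≠ 0)
    (hdeg : G.natDegree = p * (p - 1))
    (hrank : (cartierManinMatrix p (X ^ n * G)).rank ≤ 1) (i s : Fin p) (hs : (s : ℕ) ≠ n) :
    (X ^ n * G).coeff (p * i + s) = 0 := by
  have hp : 0 < p := by omega
  rw [← cartierManinMatrix_apply_rev]
  rcases lt_or_gt_of_ne hs with hlt | hgt
  · refine apply_eq_zero_of_rank_le_one hrank (i₀ := ⟨0, hp⟩) (j₀ := Fin.rev ⟨n, hn⟩) ?_ ?_ i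
    · simp [cartierManinMatrix_apply_rev, coeff_X_pow_mul', hlt]
    · simpa [cartierManinMatrix_apply_rev, coeff_X_pow_mul'] using hG₀
  · have hG : G ≠ 0 := fun h => hG₀ (by rw [h, coeff_zero])
    refine apply_eq_zero_of_rank_le_one hrank (i₀ := ⟨p - 1, by omega⟩) (j₀ := Fin.rev ⟨n, hn⟩)
      ?_ ?_ i
    · rw [cartierManinMatrix_apply_rev]
      apply coeff_eq_zero_of_natDegree_lt
      rw [natDegree_X_pow_mul n hG, hdeg]
      exact Nat.add_lt_add_left hgt _
    · rw [cartierManinMatrix_apply_rev, coeff_X_pow_mul, ← hdeg, coeff_natDegree]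
      exact leadingCoeff_ne_zero.2 hG

theorem coeff_eq_zero_of_not_dvd_of_rank_le_one (hn : n < p) (hG₀ : G.coeff 0 ≠ 0)
    (hdeg : G.natDegree = p * (p - 1))
    (hrank : (cartierManinMatrix p (X ^ n * G)).rank ≤ 1) {d : ℕ} (hd : ¬ p ∣ d) :
    G.coeff d = 0 := by
  by_cases hlarge : G.natDegree < d
  · exact coeff_eq_zero_of_natDegree_lt hlarge
  have hrow : (d + n) / p < p := by
    rw [Nat.div_lt_iff_lt_mul (by omega)]
    have hsq : p * (p - 1) + p = p * p := by
      rw [← Nat.mul_succ, Nat.succ_eq_add_one, Nat.sub_add_cancel (by omega)]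
    omega
  have hsplit := Nat.div_add_mod (d + n) p
  have hres : (d + n) % p ≠ n := fun h => hd ⟨(d + n) / p, by omega⟩
  have hcoeff := coeff_X_pow_mul_eq_zero_of_rank_le_one hn hG₀ hdeg hrank
    ⟨(d + n) / p, hrow⟩ ⟨(d + n) % p, Nat.mod_lt _ (by omega)⟩ hres
  rwa [hsplit, coeff_X_pow_mul] at hcoeff

end CartierManin

theorem expand_contract_of_coeff_eq_zero {R : Type*} [CommSemiring R] {p : ℕ} (hp : p ≠ 0)
    {G : R[X]} (hG : ∀ d, ¬ p ∣ d → G.coeff d = 0) : expand R p (contract p G) = G := by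
  ext d
  rw [coeff_expand (Nat.pos_of_ne_zero hp)]
  split_ifs with hd
  · rw [coeff_contract hp, Nat.div_mul_cancel hd]
  · exact (hG d hd).symm

theorem exists_eq_pow_of_coeff_eq_zero {R : Type*} [CommSemiring R] (p : ℕ) [ExpChar R p]
    [PerfectRing R p] {G : R[X]} (hG : ∀ d, ¬ p ∣ d → G.coeff d = 0) : ∃ h : R[X], G = h ^ p :=
  ⟨_, (expand_contract_of_coeff_eq_zero (expChar_pos R p).ne' hG).symm.trans
    (polynomial_expand_eq R p _)⟩

theorem exists_eq_pow_of_rank_le_one {K : Type*} [Field K] {p n : ℕ} [ExpChar K p]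
    [PerfectRing K p] {G : K[X]} (hn : n < p) (hG₀ : G.coeff 0 ≠ 0)
    (hdeg : G.natDegree = p * (p - 1))
    (hrank : (cartierManinMatrix p (X ^ n * G)).rank ≤ 1) :
    ∃ h : K[X], h.natDegree = p - 1 ∧ G = h ^ p := by
  obtain ⟨h, rfl⟩ := exists_eq_pow_of_coeff_eq_zero p fun _ =>
    coeff_eq_zero_of_not_dvd_of_rank_le_one hn hG₀ hdeg hrank
  rw [natDegree_pow] at hdeg
  exact ⟨h, Nat.eq_of_mul_eq_mul_left (expChar_pos K p) hdeg, rfl⟩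

theorem isUnit_of_squarefree_of_pow_eq_pow {M : Type*} [CommMonoidWithZero M] [IsCancelMulZero M]
    [DecompositionMonoid M] {a b : M} {n q : ℕ} (ha : Squarefree a) (hn : n ≠ 0)
    (hnq : n < q) (hab : a ^ n = b ^ q) : IsUnit a := by
  nontriviality M
  have hdvd : a ∣ b := ha.isRadical q b (hab ▸ dvd_pow_self a hn)
  have hpow : a ^ q ∣ a ^ n := hab ▸ pow_dvd_pow_of_dvd hdvd q
  by_contra hunit
  exact hnq.not_ge ((pow_dvd_pow_iff ha.ne_zero hunit).1 hpow)

theorem natDegree_sum_Icc_C_mul_X_pow {R : Type*} [Semiring R] (c : ℕ → R) {a b : ℕ}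
    (hab : a ≤ b) (hb : c b ≠ 0) : (∑ i ∈ Finset.Icc a b, C (c i) * X ^ i).natDegree = b := by
  apply natDegree_eq_of_le_of_coeff_ne_zero
  · exact natDegree_sum_le_of_forall_le _ _ fun i hi =>
      (natDegree_C_mul_X_pow_le _ _).trans (Finset.mem_Icc.1 hi).2
  · simpa [hab] using hb

/-- Here `f` defines the superelliptic curve `y ^ m = f(x)`; the hyperelliptic case is `m = 2`. -/
theorem genus_p_rank_one_not_squarefree_general {k : Type*} [Field k] [PerfectField k] {p m : ℕ}
    [CharP k p] (hp : p.Prime) (hm : m ∣ p - 1) {f ftil : k[X]} (hdeg : f.natDegree = m * p + 1)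
    (hc1 : f.coeff 1 ≠ 0) (hftil : f = X * ftil)
    (hrank : (cartierManinMatrix p (f ^ ((p - 1) / m))).rank ≤ 1) :
    (∃ htil : k[X], htil.natDegree = p - 1 ∧ ftil ^ ((p - 1) / m) = htil ^ p) ∧
    ¬ Squarefree f := by
  have : Fact p.Prime := ⟨hp⟩
  have hp2 := hp.two_le
  have hm0 : m ≠ 0 := by rintro rfl; omega
  set n := (p - 1) / m
  have hmn : m * n = p - 1 := Nat.mul_div_cancel' hm
  have hn0 : n ≠ 0 := fun h => by rw [h, mul_zero] at hmn; omega
  have hnp : n < p := (Nat.div_le_self _ _).trans_lt (by omega)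
  subst hftil
  rw [coeff_X_mul] at hc1
  rw [natDegree_X_mul (by rintro rfl; exact hc1 rfl), add_left_inj] at hdeg
  rw [mul_pow] at hrank
  have hpowdeg : (ftil ^ n).natDegree = p * (p - 1) := by rw [natDegree_pow, hdeg, ← hmn]; ring
  have hpow0 : (ftil ^ n).coeff 0 ≠ 0 := by
    simpa [coeff_zero_eq_eval_zero, hn0] using hc1
  obtain ⟨htil, hhtil, hpow⟩ := exists_eq_pow_of_rank_le_one hnp hpow0 hpowdeg hrank
  refine ⟨⟨htil, hhtil, hpow⟩, fun hsq => ?_⟩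
  have hunit := isUnit_of_squarefree_of_pow_eq_pow hsq.of_mul_right hn0 hnp hpow
  rw [natDegree_eq_zero_of_isUnit hunit] at hdeg
  exact mul_ne_zero hm0 hp.ne_zero hdeg.symm

/-- For `g = p`, `c 1 ≠ 0`, `f = X * f̃`: if the Cartier–Manin matrix has rank one,
then `f̃ ^ ((p-1)/2) = h̃ ^ p` for some `h̃` of degree `p - 1`; consequently `f` is
not squarefree. -/
theorem genus_p_rank_one_not_squarefree
    (p : ℕ) (hp : p.Prime) (hodd : Odd p)
    (k : Type*) [Field k] [IsAlgClosed k] [CharP k p]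
    (c : ℕ → k) (hclead : c (2 * p + 1) = 1) (hc1 : c 1 ≠ 0)
    (f : k[X]) (hf : f = ∑ i ∈ Finset.Icc 1 (2 * p + 1), C (c i) * X ^ i)
    (ftil : k[X]) (hftil : f = X * ftil)
    (A : Matrix (Fin p) (Fin p) k)
    (hA : ∀ i j : Fin p,
      A i j = (f ^ ((p - 1) / 2)).coeff (p * ((i : ℕ) + 1) - ((j : ℕ) + 1)))
    (hrank : A.rank = 1) :
    (∃ htil : k[X], htil.natDegree = p - 1 ∧ ftil ^ ((p - 1) / 2) = htil ^ p) ∧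
    ¬ Squarefree f := by
  obtain rfl : A = cartierManinMatrix p (f ^ ((p - 1) / 2)) := Matrix.ext hA
  have hdeg : f.natDegree = 2 * p + 1 :=
    hf ▸ natDegree_sum_Icc_C_mul_X_pow c (by omega) (by simp [hclead])
  have hcoeff : f.coeff 1 = c 1 := by simp [hf]
  exact genus_p_rank_one_not_squarefree_general hp (hodd.tsub_odd odd_one).two_dvd hdeg
    (hcoeff ▸ hc1) hftil hrank.le
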